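/- arXiv:2502.07005 — 2 statements merged into one kernel-verified Lean document; each statement's English description precedes it below -/
import Mathlib

section
/- Let G be a simple graph on a finite vertex type V, let F be a type of node features, and for each layer l let φ_l : F → F → F and ψ_l : F → F → F be arbitrary maps, where the feature space F carries a commutative additive monoid structure used for aggregation. Given an initial assignment g : V → F, define recursively f⁰(g) = g and f^{l+1}(g) v = φ_l (f^l(g) v) (∑_{w ∈ G.neighborFinset v} ψ_l (f^l(g) v) (f^l(g) w)). Then for every L and every vertex v, the output f^L(g) v depends only on the initial features of vertices reachable from v by a walk of length at most L: if g, g' : V → F satisfy g u = g' u for every vertex u for which there exists a walk in G from v to u of length at most L, then f^L(g) v = f^L(g') v. -/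
/-- `L` rounds of message passing on a simple graph: each node combines its own feature
with the sum of messages from its neighbours. -/
def mpnn {V : Type*} {F : Type*} [AddCommMonoid F] [Fintype V]
    (G : SimpleGraph V) [DecidableRel G.Adj]
    (φ ψ : ℕ → F → F → F) : ℕ → (V → F) → V → F
  | 0, g => g
  | l + 1, g => fun v =>
      φ l (mpnn G φ ψ l g v)
        (∑ w ∈ G.neighborFinset v, ψ l (mpnn G φ ψ l g v) (mpnn G φ ψ l g w))

/-- **Locality of message passing.** After `L` rounds of message passing, the feature
at a vertex `v` depends only on the initial features of vertices reachable from `v`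
by a walk of length at most `L`. -/
theorem mpnn_locality
    {V : Type*} {F : Type*} [AddCommMonoid F] [Fintype V]
    (G : SimpleGraph V) [DecidableRel G.Adj]
    (φ ψ : ℕ → F → F → F) (L : ℕ) (v : V) (g g' : V → F)
    (h : ∀ u : V, (∃ w : G.Walk v u, w.length ≤ L) → g u = g' u) :
    mpnn G φ ψ L g v = mpnn G φ ψ L g' v := by
  induction L generalizing v with
  | zero => exact h v ⟨.nil, le_rfl⟩
  | succ l ih =>
    have hv : mpnn G φ ψ l g v = mpnn G φ ψ l g' v :=
      ih v fun u ⟨p, hp⟩ => h u ⟨p, hp.trans l.le_succ⟩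
    -- A walk of length at most `l` from a neighbour `w` extends, by the edge `v w`, to a walk
    -- of length at most `l + 1` from `v`; so the induction hypothesis applies at `w`.
    have hw : ∀ w ∈ G.neighborFinset v, mpnn G φ ψ l g w = mpnn G φ ψ l g' w := by
      intro w hw
      rw [SimpleGraph.mem_neighborFinset] at hw
      exact ih w fun u ⟨p, hp⟩ => h u ⟨.cons hw p, Nat.succ_le_succ hp⟩
    simp only [mpnn]
    rw [hv, Finset.sum_congr rfl fun w hw' => by rw [hw w hw']]
end

section
/- Let G be a simple graph on a finite vertex type V (the object graph), F a feature type carrying a commutative additive monoid structure, and for l < L let φ_l, ψ_l : F → F → F be arbitrary maps defining L rounds of message passing f⁰(g) = g, f^{l+1}(g) u = φ_l (f^l(g) u) (∑_{w ∈ G.neighborFinset u} ψ_l (f^l(g) u) (f^l(g) w)). Fix an actuator with neighbour set S ⊆ V, a constant c in some type C, an aggregation-to-output map Φ : C → F → F, and a per-object message map Ψ : F → F, and define the actuator output A(g) = Φ c (∑_{u ∈ S} Ψ (f^L(g) u)). Then A(g) depends only on the initial features of object nodes reachable from some node of S by a walk in G of length at most L: if g, g' : V → F agree at every vertex u' for which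 there exists u ∈ S and a walk in G from u to u' of length at most L, then A(g) = A(g'). In particular, for any object node u₀ outside this set, A is independent of g u₀. -/
/-- A node's feature after `l` rounds depends only on initial features within `l` hops:
each round reads only neighbours, and a walk from a neighbour extends to one from the node itself
by prepending the connecting edge. -/
lemma mpnn_congr_of_walk {V : Type*} {F : Type*} [AddCommMonoid F] [Fintype V]
    (G : SimpleGraph V) [DecidableRel G.Adj] (φ ψ : ℕ → F → F → F) (g g' : V → F)
    (l : ℕ) (v : V) (h : ∀ u : V, (∃ w : G.Walk v u, w.length ≤ l) → g u = g' u) :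
    mpnn G φ ψ l g v = mpnn G φ ψ l g' v := by
  induction l generalizing v with
  | zero => exact h v ⟨.nil, le_rfl⟩
  | succ l ih =>
    have hv : mpnn G φ ψ l g v = mpnn G φ ψ l g' v :=
      ih v fun u ⟨w, hw⟩ => h u ⟨w, by omega⟩
    simp only [mpnn, hv]
    congr 1
    refine Finset.sum_congr rfl fun x hx => ?_
    have hadj : G.Adj v x := (G.mem_neighborFinset v x).mp hx
    rw [ih x fun u ⟨w, hw⟩ => h u ⟨.cons hadj w, by simpa using hw⟩]

/-- **MPNN + VN_Local actuator output depends only on object nodes within `L` hops of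
its neighbour set.** If the actuator aggregates `L`-layer object features only over a
neighbour set `S`, then its output depends only on the initial features of object
nodes reachable from some node of `S` by a walk of length at most `L`; in particular
it is independent of the feature of any object node outside this set. -/
theorem mpnn_vn_local_locality
    {V : Type*} {F : Type*} {C : Type*} [AddCommMonoid F] [Fintype V] [DecidableEq V]
    (G : SimpleGraph V) [DecidableRel G.Adj]
    (L : ℕ) (φ ψ : ℕ → F → F → F)
    (S : Finset V) (c : C) (Φ : C → F → F) (Ψ : F → F)
    (A : (V → F) → F)
    (hA : ∀ g, A g = Φ c (∑ u ∈ S, Ψ (mpnn G φ ψ L g u))) :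
    (∀ g g' : V → F,
        (∀ u' : V, (∃ u ∈ S, ∃ w : G.Walk u u', w.length ≤ L) → g u' = g' u') →
        A g = A g') ∧
      (∀ u₀ : V, ¬ (∃ u ∈ S, ∃ w : G.Walk u u₀, w.length ≤ L) →
        ∀ (g : V → F) (x : F), A (Function.update g u₀ x) = A g) := by
  have key : ∀ g g' : V → F,
      (∀ u' : V, (∃ u ∈ S, ∃ w : G.Walk u u', w.length ≤ L) → g u' = g' u') → A g = A g' := by
    intro g g' h
    rw [hA, hA]
    congr 1
    refine Finset.sum_congr rfl fun u hu => ?_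
    rw [mpnn_congr_of_walk G φ ψ g g' L u fun u' hw => h u' ⟨u, hu, hw⟩]
  refine ⟨key, fun u₀ hu₀ g x => key _ _ fun u' hu' => ?_⟩
  have hne : u' ≠ u₀ := by
    rintro rfl
    exact hu₀ hu'
  exact Function.update_of_ne hne x g
end
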